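/- For every integer m ≥ 14, there exists a finite planar ({3,m};4)-graph on m + 4⌈(m+1)/5⌉ + 3 vertices; hence n_p({3,m};4) ≤ m + 4⌈(m+1)/5⌉ + 3. -/

import Mathlib

open SimpleGraph

/-- `H` is a minor of `G`: there is an assignment of pairwise disjoint connected
branch sets in `G` to the vertices of `H`, with an edge of `G` between the branch
sets of any two adjacent vertices of `H`. -/
def SimpleGraph.IsMinorOf {W V : Type*} (H : SimpleGraph W) (G : SimpleGraph V) : Prop :=
  ∃ f : W → Set V,
    (∀ w, (G.induce (f w)).Connected) ∧
    (Pairwise fun w₁ w₂ => Disjoint (f w₁) (f w₂)) ∧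
    ∀ ⦃w₁ w₂⦄, H.Adj w₁ w₂ → ∃ v₁ ∈ f w₁, ∃ v₂ ∈ f w₂, G.Adj v₁ v₂

/-- A graph is planar iff it has no `K₅` minor and no `K₃,₃` minor (Wagner's theorem). -/
def SimpleGraph.IsPlanar {V : Type*} (G : SimpleGraph V) : Prop :=
  ¬ (completeGraph (Fin 5)).IsMinorOf G ∧
    ¬ (completeBipartiteGraph (Fin 3) (Fin 3)).IsMinorOf G

/-- A graph is outerplanar iff it has no `K₄` minor and no `K₂,₃` minor. -/
def SimpleGraph.IsOuterplanar {V : Type*} (G : SimpleGraph V) : Prop :=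
  ¬ (completeGraph (Fin 4)).IsMinorOf G ∧
    ¬ (completeBipartiteGraph (Fin 2) (Fin 3)).IsMinorOf G

/-- The degree of a vertex, as the cardinality of its neighbour set. -/
noncomputable def SimpleGraph.degN {V : Type*} (G : SimpleGraph V) (v : V) : ℕ :=
  (G.neighborSet v).ncard

/-- An `({r,m};g)`-graph: girth `g`, every vertex has degree `r` or `m`, both occur. -/
def IsBigirthGraph {V : Type*} (G : SimpleGraph V) (r m g : ℕ) : Prop :=
  G.girth = g ∧ (∀ v, G.degN v = r ∨ G.degN v = m) ∧
    (∃ v, G.degN v = r) ∧ (∃ v, G.degN v = m)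

/-- The set of orders of finite planar `({r,m};g)`-graphs. -/
def bicageOrders (r m g : ℕ) : Set ℕ :=
  {n | ∃ (V : Type) (_ : Fintype V) (G : SimpleGraph V),
    G.IsPlanar ∧ IsBigirthGraph G r m g ∧ Fintype.card V = n}

/-!
A drawing in which disjoint edges cross evenly often passes to minors: contracting branch sets
replaces edges by walks, and crossing parities are additive along walks. In every drawing of `K₅` or
`K₃,₃`, however, the number of crossings between disjoint edges is odd. So a graph whose vertices
lie on a line and whose edges are half-circles above or below it, without crossings, is planar.

The graphs of the theorem are chains of such graphs, called strips, around a hub of degree `m`;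
consecutive strips share the hub and one further vertex. One kind of strip adds 9 vertices and 5 to
the degree of the hub, which gives the order `m + 4m/5 + O(1)`; at most two shorter strips, adding 3
or 4 to that degree, take care of the residue of `m` modulo 5.
-/

section EvenDrawings

variable {V W : Type*} {G : SimpleGraph V} {H : SimpleGraph W}

/-- The parity of the number of crossings of an arc from `u` to `v` and an arc from `x` to `y`,
computed from the relative positions of their ends. Here `left a c` is the parity of "`a` has a
smaller abscissa than `c`", `f c` is the parity of the number of times the first arc passes above
the point `c`, and `g` is the same for the second arc. -/
def crossingParity (left : V → V → ZMod 2) (f g : V → ZMod 2) (u v x y : V) : ZMod 2 :=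
  f x + f y + g u + g v + (left u x + left v x + left u y + left v y)

/-- The combinatorial trace of a drawing in the plane in which any two edges without a common end
cross an even number of times: `above a b c` is the parity of the number of times the edge `ab`
passes above the vertex `c`, and `left a c` tells whether `a` lies to the left of `c`. -/
structure EvenDrawing (G : SimpleGraph V) where
  above : V → V → V → ZMod 2
  left : V → V → ZMod 2
  left_swap : ∀ ⦃a c⦄, a ≠ c → left c a = 1 + left a c
  crossingParity_eq_zero : ∀ ⦃a b c d⦄, G.Adj a b → G.Adj c d → a ≠ c → a ≠ d → b ≠ c → b ≠ d →
    crossingParity left (above a b) (above c d) a b c d = 0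

namespace EvenDrawing

variable (D : EvenDrawing G)

/-- The parity of the number of times a walk, drawn edge by edge, passes above a vertex. -/
def walkAbove {u v : V} (P : G.Walk u v) (c : V) : ZMod 2 :=
  (P.darts.map fun e => D.above e.fst e.snd c).sum

theorem crossingParity_edge_walk {a b x y : V} (hab : G.Adj a b) (Q : G.Walk x y)
    (ha : a ∉ Q.support) (hb : b ∉ Q.support) :
    crossingParity D.left (D.above a b) (D.walkAbove Q) a b x y = 0 := by
  induction Q with
  | nil => simp only [crossingParity, walkAbove, Walk.darts_nil, List.map_nil, List.sum_nil]; grind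
  | @cons x z y hxz Q ih =>
    simp only [Walk.support_cons, List.mem_cons, not_or] at ha hb
    have h_edge := D.crossingParity_eq_zero hab hxz ha.1
      (fun h => ha.2 (h ▸ Q.start_mem_support)) hb.1 (fun h => hb.2 (h ▸ Q.start_mem_support))
    have h_walk := ih ha.2 hb.2
    simp only [crossingParity, walkAbove, Walk.darts_cons, List.map_cons, List.sum_cons]
      at h_edge h_walk ⊢
    grind

theorem crossingParity_walk_walk {u v x y : V} (P : G.Walk u v) (Q : G.Walk x y)
    (hPQ : P.support.Disjoint Q.support) :
    crossingParity D.left (D.walkAbove P) (D.walkAbove Q) u v x y = 0 := by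
  induction P with
  | nil => simp only [crossingParity, walkAbove, Walk.darts_nil, List.map_nil, List.sum_nil]; grind
  | @cons u w v huw P ih =>
    rw [Walk.support_cons, List.disjoint_cons_left] at hPQ
    have h_edge := D.crossingParity_edge_walk huw Q hPQ.1 (hPQ.2 P.start_mem_support)
    have h_walk := ih hPQ.2
    simp only [crossingParity, walkAbove, Walk.darts_cons, List.map_cons, List.sum_cons]
      at h_edge h_walk ⊢
    grind

end EvenDrawing

theorem exists_walk_of_connected_induce {S : Set V} (hS : (G.induce S).Connected) {a b : V}
    (ha : a ∈ S) (hb : b ∈ S) : ∃ P : G.Walk a b, ∀ z ∈ P.support, z ∈ S := by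
  obtain ⟨P⟩ := hS.preconnected ⟨a, ha⟩ ⟨b, hb⟩
  refine ⟨P.map (Embedding.induce S).toHom, fun z hz => ?_⟩
  obtain ⟨w, -, rfl⟩ := List.mem_map.1 (Walk.support_map _ P ▸ hz)
  exact w.2

theorem exists_walks_of_isMinorOf (hHG : H.IsMinorOf G) :
    ∃ (p : W → V) (S : W → Set V) (P : ∀ i j, H.Adj i j → G.Walk (p i) (p j)),
      (∀ i, p i ∈ S i) ∧ (Pairwise fun i j => Disjoint (S i) (S j)) ∧
      ∀ i j hij, ∀ z ∈ (P i j hij).support, z ∈ S i ∪ S j := by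
  obtain ⟨S, h_conn, h_disj, h_adj⟩ := hHG
  have h_nonempty (i : W) : ∃ v, v ∈ S i := (h_conn i).nonempty.elim fun v => ⟨v, v.2⟩
  choose p hp using h_nonempty
  have h_walk (i j : W) (hij : H.Adj i j) :
      ∃ P : G.Walk (p i) (p j), ∀ z ∈ P.support, z ∈ S i ∪ S j := by
    obtain ⟨a, ha, b, hb, hab⟩ := h_adj hij
    obtain ⟨P, hP⟩ := exists_walk_of_connected_induce (h_conn i) (hp i) ha
    obtain ⟨Q, hQ⟩ := exists_walk_of_connected_induce (h_conn j) hb (hp j)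
    refine ⟨P.append (.cons hab Q), fun z hz => ?_⟩
    rw [Walk.mem_support_append_iff, Walk.support_cons, List.mem_cons] at hz
    rcases hz with hz | rfl | hz
    exacts [.inl (hP z hz), .inl ha, .inr (hQ z hz)]
  choose P hP using h_walk
  exact ⟨p, S, P, hp, h_disj, hP⟩

theorem EvenDrawing.nonempty_of_isMinorOf (D : EvenDrawing G) (hHG : H.IsMinorOf G) :
    Nonempty (EvenDrawing H) := by
  classical
  obtain ⟨p, S, P, hp, hS, hP⟩ := exists_walks_of_isMinorOf hHG
  have h_ne {i k : W} (hik : i ≠ k) {z w : V} (hz : z ∈ S i) (hw : w ∈ S k) : z ≠ w :=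
    (hS hik).ne_of_mem hz hw
  refine ⟨⟨fun i j k => if hij : H.Adj i j then D.walkAbove (P i j hij) (p k) else 0,
    fun i k => D.left (p i) (p k), fun i k hik => D.left_swap (h_ne hik (hp i) (hp k)), ?_⟩⟩
  intro i j k l hij hkl hik hil hjk hjl
  have h_disj : (P i j hij).support.Disjoint (P k l hkl).support := by
    intro z hz hz'
    rcases hP i j hij z hz with h | h <;> rcases hP k l hkl z hz' with h' | h'
    exacts [h_ne hik h h' rfl, h_ne hil h h' rfl, h_ne hjk h h' rfl, h_ne hjl h h' rfl]
  simpa only [crossingParity, hij, hkl, dif_pos] using D.crossingParity_walk_walk _ _ h_disj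

-- Every term `above i j k` occurs twice and cancels. Of the `left` terms, an odd number compares
-- two vertices in decreasing order, so that the reversals contribute `1`.
theorem sum_crossingParity_completeGraph_five (above : Fin 5 → Fin 5 → Fin 5 → ZMod 2)
    (left : Fin 5 → Fin 5 → ZMod 2) (left_swap : ∀ ⦃a c⦄, a ≠ c → left c a = 1 + left a c) :
    let cr i j k l := crossingParity left (above i j) (above k l) i j k l
    cr 0 1 2 3 + cr 0 2 1 3 + cr 0 3 1 2 + cr 0 1 2 4 + cr 0 2 1 4 +
      cr 0 4 1 2 + cr 0 1 3 4 + cr 0 3 1 4 + cr 0 4 1 3 + cr 0 2 3 4 +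
      cr 0 3 2 4 + cr 0 4 2 3 + cr 1 2 3 4 + cr 1 3 2 4 + cr 1 4 2 3 = 1 := by
  have h_swap (a c : Fin 5) (h : a < c) := left_swap h.ne
  simp only [crossingParity, h_swap 1 2 (by decide), h_swap 1 3 (by decide),
    h_swap 1 4 (by decide), h_swap 2 3 (by decide), h_swap 2 4 (by decide), h_swap 3 4 (by decide)]
  grind

theorem isEmpty_evenDrawing_completeGraph_five :
    IsEmpty (EvenDrawing (completeGraph (Fin 5))) := by
  refine ⟨fun D => ?_⟩
  have h_even (i j k l : Fin 5) (h : [i, j, k, l].Nodup) :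
      crossingParity D.left (D.above i j) (D.above k l) i j k l = 0 := by
    simp only [List.nodup_cons, List.mem_cons, List.not_mem_nil, or_false, not_or] at h
    exact D.crossingParity_eq_zero h.1.1 h.2.2.1 h.1.2.1 h.1.2.2 h.2.1.1 h.2.1.2
  have h_odd := sum_crossingParity_completeGraph_five D.above D.left D.left_swap
  simp (disch := decide) only [h_even, add_zero] at h_odd
  exact zero_ne_one h_odd

theorem sum_crossingParity_completeBipartiteGraph_three_three
    (above : Fin 3 ⊕ Fin 3 → Fin 3 ⊕ Fin 3 → Fin 3 ⊕ Fin 3 → ZMod 2)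
    (left : Fin 3 ⊕ Fin 3 → Fin 3 ⊕ Fin 3 → ZMod 2)
    (left_swap : ∀ ⦃a c⦄, a ≠ c → left c a = 1 + left a c) :
    let cr i j k l := crossingParity left (above (.inl i) (.inr j)) (above (.inl k) (.inr l))
      (.inl i) (.inr j) (.inl k) (.inr l)
    cr 0 0 1 1 + cr 0 1 1 0 + cr 0 0 1 2 + cr 0 2 1 0 + cr 0 1 1 2 + cr 0 2 1 1 +
      cr 0 0 2 1 + cr 0 1 2 0 + cr 0 0 2 2 + cr 0 2 2 0 + cr 0 1 2 2 + cr 0 2 2 1 +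
      cr 1 0 2 1 + cr 1 1 2 0 + cr 1 0 2 2 + cr 1 2 2 0 + cr 1 1 2 2 + cr 1 2 2 1 = 1 := by
  have h_swap (j l : Fin 3) (h : j < l) := left_swap (Sum.inr_injective.ne h.ne)
  simp only [crossingParity, h_swap 0 1 (by decide), h_swap 0 2 (by decide),
    h_swap 1 2 (by decide)]
  grind

theorem isEmpty_evenDrawing_completeBipartiteGraph_three_three :
    IsEmpty (EvenDrawing (completeBipartiteGraph (Fin 3) (Fin 3))) := by
  refine ⟨fun D => ?_⟩
  have h_even (i j k l : Fin 3) (hik : i ≠ k) (hjl : j ≠ l) :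
      crossingParity D.left (D.above (.inl i) (.inr j)) (D.above (.inl k) (.inr l))
        (.inl i) (.inr j) (.inl k) (.inr l) = 0 :=
    D.crossingParity_eq_zero (by simp) (by simp) (by simpa using hik) Sum.inl_ne_inr
      Sum.inr_ne_inl (by simpa using hjl)
  have h_odd := sum_crossingParity_completeBipartiteGraph_three_three D.above D.left D.left_swap
  simp (disch := decide) only [h_even, add_zero] at h_odd
  exact zero_ne_one h_odd

theorem EvenDrawing.isPlanar (D : EvenDrawing G) : G.IsPlanar :=
  ⟨fun h => (D.nonempty_of_isMinorOf h).elim isEmpty_evenDrawing_completeGraph_five.false,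
    fun h => (D.nonempty_of_isMinorOf h).elim
      isEmpty_evenDrawing_completeBipartiteGraph_three_three.false⟩

end EvenDrawings

section BookEmbeddings

variable {V : Type*} [LinearOrder V] {G U L : SimpleGraph V}

/-- The edges of `G`, drawn as half-circles on one side of a line along which the vertices are
placed in increasing order, do not cross. Two graphs on `V` with this property form the pages of a
two-page book embedding of their union. -/
def NoncrossingOnLine (G : SimpleGraph V) : Prop :=
  ∀ ⦃a b⦄, G.Adj a b → ∀ ⦃c d⦄, G.Adj c d → a < c → c < b → ¬ b < d

/-- The function `left` of an `EvenDrawing` whose vertices are placed on a line. -/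
def leftParity (a c : V) : ZMod 2 := if a < c then 1 else 0

theorem leftParity_swap {a c : V} (hac : a ≠ c) : leftParity c a = 1 + leftParity a c := by
  rcases hac.lt_or_gt with h | h <;> simp only [leftParity, h, h.not_gt, if_true, if_false] <;>
    decide

-- `leftParity a c + leftParity b c` is `1` exactly if `c` lies between `a` and `b`, and arcs on the
-- same side of the line do not cross iff both or neither of `c` and `d` lie between `a` and `b`.
theorem NoncrossingOnLine.sum_leftParity_eq_zero (hG : NoncrossingOnLine G) {a b c d : V}
    (hab : G.Adj a b) (hcd : G.Adj c d) (hac : a ≠ c) (had : a ≠ d) (hbc : b ≠ c) (hbd : b ≠ d) :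
    leftParity a c + leftParity b c + leftParity a d + leftParity b d = 0 := by
  have h_ab := hG hab hcd
  have h_ba := hG hab.symm hcd
  have h_ab' := hG hab hcd.symm
  have h_ba' := hG hab.symm hcd.symm
  have h_cd := hG hcd hab
  have h_dc := hG hcd.symm hab
  have h_cd' := hG hcd hab.symm
  have h_dc' := hG hcd.symm hab.symm
  unfold leftParity
  rcases hac.lt_or_gt with h₁ | h₁ <;> rcases had.lt_or_gt with h₂ | h₂ <;>
    rcases hbc.lt_or_gt with h₃ | h₃ <;> rcases hbd.lt_or_gt with h₄ | h₄ <;>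
    grind

open Classical in
/-- The drawing of a two-page book embedding: the edges of `U` pass above the vertices between
their ends, the others below. -/
noncomputable def EvenDrawing.ofTwoPages (hU : NoncrossingOnLine U) (hL : NoncrossingOnLine L) :
    EvenDrawing (U ⊔ L) where
  above a b c := if U.Adj a b then leftParity a c + leftParity b c else 0
  left := leftParity
  left_swap _ _ := leftParity_swap
  crossingParity_eq_zero a b c d hab hcd hac had hbc hbd := by
    rw [sup_adj] at hab hcd
    have h_upper (h : U.Adj a b) (h' : U.Adj c d) :=
      hU.sum_leftParity_eq_zero h h' hac had hbc hbd
    have h_lower (h : L.Adj a b) (h' : L.Adj c d) :=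
      hL.sum_leftParity_eq_zero h h' hac had hbc hbd
    unfold crossingParity
    -- If `S` is the sum that vanishes in `h_upper` and `h_lower`, this parity is `3 S`, `2 S` or
    -- `S`, according as two, one or none of the edges are drawn above the line.
    split_ifs <;> grind [leftParity_swap]

theorem NoncrossingOnLine.isPlanar_sup (hU : NoncrossingOnLine U) (hL : NoncrossingOnLine L) :
    (U ⊔ L).IsPlanar :=
  (EvenDrawing.ofTwoPages hU hL).isPlanar

end BookEmbeddings

section DegreeAndGirth

variable {V W : Type*} {G H : SimpleGraph V}

theorem map_sup_eq (f : V ↪ W) (G H : SimpleGraph V) : (G ⊔ H).map f = G.map f ⊔ H.map f :=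
  GaloisConnection.l_sup fun _ _ => map_le_iff_le_comap f _ _

theorem degN_map (f : V ↪ W) (G : SimpleGraph V) (v : V) : (G.map f).degN (f v) = G.degN v := by
  rw [degN, neighborSet_map, Set.ncard_image_of_injective _ f.injective, degN]

theorem degN_eq_zero_of_notMem_support {v : V} (hv : v ∉ G.support) : G.degN v = 0 := by
  have h_empty : G.neighborSet v = ∅ :=
    Set.eq_empty_of_forall_notMem fun w hw => hv ⟨w, hw⟩
  rw [degN, h_empty, Set.ncard_empty]

theorem degN_sup_of_disjoint [Finite V] (hGH : Disjoint G H) (v : V) :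
    (G ⊔ H).degN v = G.degN v + H.degN v := by
  rw [degN, neighborSet_sup, Set.ncard_union_eq (disjoint_neighborSet.2 hGH v), degN, degN]

theorem disjoint_of_isIndepSet (hGH : (G ⊔ H).IsIndepSet (G.support ∩ H.support)) :
    Disjoint G H := by
  rw [SimpleGraph.disjoint_left]
  intro v w hG hH
  exact hGH ⟨⟨w, hG⟩, ⟨w, hH⟩⟩ ⟨⟨v, hG.symm⟩, ⟨v, hH.symm⟩⟩ hG.ne (.inl hG)

theorem cliqueFree_three_iff :
    G.CliqueFree 3 ↔ ∀ a b c, G.Adj a b → G.Adj a c → ¬ G.Adj b c := by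
  classical
  refine ⟨fun h a b c hab hac hbc => h _ (is3Clique_triple_iff.2 ⟨hab, hac, hbc⟩),
    fun h s hs => ?_⟩
  obtain ⟨a, b, c, hab, hac, hbc, -⟩ := is3Clique_iff.1 hs
  exact h a b c hab hac hbc

theorem cliqueFree_three_sup (hG : G.CliqueFree 3) (hH : H.CliqueFree 3)
    (hGH : (G ⊔ H).IsIndepSet (G.support ∩ H.support)) : (G ⊔ H).CliqueFree 3 := by
  rw [cliqueFree_three_iff] at hG hH ⊢
  have h_vertex {a b c : V} (hab : G.Adj a b) (hac : H.Adj a c) : ¬ (G ⊔ H).Adj b c := by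
    have ha : a ∈ G.support ∩ H.support := ⟨⟨b, hab⟩, ⟨c, hac⟩⟩
    rintro (hbc | hbc)
    · exact hGH ha ⟨⟨b, hbc.symm⟩, ⟨a, hac.symm⟩⟩ hac.ne (.inr hac)
    · exact hGH ha ⟨⟨a, hab.symm⟩, ⟨c, hbc⟩⟩ hab.ne (.inl hab)
  rintro a b c (hab | hab) (hac | hac) hbc
  · exact hbc.elim (hG a b c hab hac) fun hbc => h_vertex hab.symm hbc (.inl hac)
  · exact h_vertex hab hac hbc
  · exact h_vertex hac hab hbc.symm
  · exact hbc.elim (fun hbc => h_vertex hbc hab.symm (.inr hac.symm)) (hH a b c hab hac)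

theorem cycleGraph_four_isContained_iff : cycleGraph 4 ⊑ G ↔
    ∃ a b c d, a ≠ c ∧ b ≠ d ∧ G.Adj a b ∧ G.Adj b c ∧ G.Adj c d ∧ G.Adj d a := by
  constructor
  · rintro ⟨φ⟩
    have h_adj {i j : Fin 4} (hij : (cycleGraph 4).Adj i j) := φ.toHom.map_adj hij
    exact ⟨φ 0, φ 1, φ 2, φ 3, φ.injective.ne (by decide), φ.injective.ne (by decide),
      h_adj (by decide), h_adj (by decide), h_adj (by decide), h_adj (by decide)⟩
  · rintro ⟨a, b, c, d, hac, hbd, hab, hbc, hcd, hda⟩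
    rw [cycleGraph_isContained_iff (by norm_num)]
    refine ⟨a, .cons hab (.cons hbc (.cons hcd (.cons hda .nil))), ?_, rfl⟩
    simp [Walk.cons_isCycle_iff, hab.ne, hab.ne', hbc.ne, hcd.ne, hda.ne, hda.ne', hac, hac.symm,
      hbd]

theorem four_le_egirth (h_free : G.CliqueFree 3) : 4 ≤ G.egirth := by
  rw [show (4 : ℕ∞) = (4 : ℕ) from rfl, le_egirth]
  intro a w hw
  have h_ne : w.length ≠ 3 := fun h =>
    (is3Clique_iff_exists_cycle_length_three.2 ⟨a, w, hw, h⟩).elim h_free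
  have := hw.three_le_length
  exact_mod_cast (by omega : 4 ≤ w.length)

theorem girth_eq_four (h_free : G.CliqueFree 3) (h_square : cycleGraph 4 ⊑ G) : G.girth = 4 := by
  obtain ⟨a, w, hw, hw_length⟩ := (cycleGraph_isContained_iff (by norm_num)).1 h_square
  have h_le : G.egirth ≤ 4 := by exact_mod_cast hw_length ▸ egirth_le_length hw
  rw [girth, (four_le_egirth h_free).antisymm' h_le]
  rfl

end DegreeAndGirth

section Strips

theorem NoncrossingOnLine.map {V W : Type*} [LinearOrder V] [LinearOrder W] {G : SimpleGraph V}
    (hG : NoncrossingOnLine G) (f : V ↪o W) : NoncrossingOnLine (G.map f) := by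
  rintro _ _ ⟨-, a, b, hab, rfl, rfl⟩ _ _ ⟨-, c, d, hcd, rfl, rfl⟩
  simpa only [f.lt_iff_lt] using hG hab hcd

theorem NoncrossingOnLine.sup_of_support {V : Type*} [LinearOrder V] [OrderBot V]
    {G H : SimpleGraph V} (hG : NoncrossingOnLine G) (hH : NoncrossingOnLine H) {p : V}
    (hGp : ∀ v ∈ G.support, v ≤ p) (hHp : ∀ v ∈ H.support, v = ⊥ ∨ p ≤ v) :
    NoncrossingOnLine (G ⊔ H) := by
  rintro a b (hab | hab) c d (hcd | hcd) hac hcb hbd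
  · exact hG hab hcd hac hcb hbd
  · rcases hHp c ⟨d, hcd⟩ with rfl | hpc
    · exact not_lt_bot hac
    · exact (hpc.trans_lt hcb).not_ge (hGp b ⟨a, hab.symm⟩)
  · rcases hHp b ⟨a, hab.symm⟩ with rfl | hpb
    · exact not_lt_bot hcb
    · exact (hpb.trans_lt hbd).not_ge (hGp d ⟨c, hcd.symm⟩)
  · exact hH hab hcd hac hcb hbd

variable {k k' : ℕ}

/-- The position in `Fin (k + k' + 2)` of the vertices of the first of two glued strips. -/
def oldVertex (k k' : ℕ) : Fin (k + 2) ↪o Fin (k + k' + 2) :=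
  Fin.castLEOrderEmb (by omega)

/-- The position in `Fin (k + k' + 2)` of the vertices of the second of two glued strips: its
vertex `0` is identified with the vertex `0` of the first strip, and its vertex `1` with the last
vertex `k + 1` of the first strip. -/
def newVertex (k k' : ℕ) : Fin (k' + 2) ↪o Fin (k + k' + 2) :=
  OrderEmbedding.ofStrictMono (fun j => ⟨if j = 0 then 0 else k + j, by split_ifs <;> omega⟩)
    fun i j hij => by
      simp only [Fin.lt_def, Fin.ext_iff, Fin.val_zero] at hij ⊢
      split_ifs <;> omega

theorem val_oldVertex (i : Fin (k + 2)) : (oldVertex k k' i : ℕ) = i := rfl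

theorem val_newVertex {j : Fin (k' + 2)} (hj : j ≠ 0) : (newVertex k k' j : ℕ) = k + j :=
  if_neg hj

theorem newVertex_zero : newVertex k k' 0 = oldVertex k k' 0 := rfl

theorem newVertex_one : newVertex k k' 1 = oldVertex k k' (Fin.last (k + 1)) :=
  Fin.ext (val_newVertex (by simp))

theorem newVertex_last : newVertex k k' (Fin.last (k' + 1)) = Fin.last (k + k' + 1) :=
  Fin.ext (val_newVertex (by simp [Fin.ext_iff]))

/-- Two graphs glued at their vertex `0` and, the last vertex of the first graph being the vertex
`1` of the second one, along a line. -/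
def glue (G : SimpleGraph (Fin (k + 2))) (H : SimpleGraph (Fin (k' + 2))) :
    SimpleGraph (Fin (k + k' + 2)) :=
  G.map (oldVertex k k') ⊔ H.map (newVertex k k')

theorem le_of_mem_support_map_oldVertex {G : SimpleGraph (Fin (k + 2))} {v : Fin (k + k' + 2)}
    (hv : v ∈ (G.map (oldVertex k k')).support) : v ≤ oldVertex k k' (Fin.last (k + 1)) := by
  obtain ⟨_, -, i, _, -, rfl, -⟩ := hv
  exact (oldVertex k k').monotone i.le_last

theorem eq_bot_or_le_of_mem_support_map_newVertex {H : SimpleGraph (Fin (k' + 2))}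
    {v : Fin (k + k' + 2)} (hv : v ∈ (H.map (newVertex k k')).support) :
    v = ⊥ ∨ oldVertex k k' (Fin.last (k + 1)) ≤ v := by
  obtain ⟨_, -, j, _, -, rfl, -⟩ := hv
  rw [← newVertex_one]
  rcases eq_or_ne j 0 with rfl | hj
  · exact .inl rfl
  · exact .inr ((newVertex k k').monotone (Fin.one_le_of_ne_zero hj))

theorem NoncrossingOnLine.glue {G : SimpleGraph (Fin (k + 2))} {H : SimpleGraph (Fin (k' + 2))}
    (hG : NoncrossingOnLine G) (hH : NoncrossingOnLine H) : NoncrossingOnLine (glue G H) :=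
  (hG.map _).sup_of_support (hH.map _) (fun _ => le_of_mem_support_map_oldVertex)
    fun _ => eq_bot_or_le_of_mem_support_map_newVertex

theorem glue_sup_glue (U L : SimpleGraph (Fin (k + 2))) (U' L' : SimpleGraph (Fin (k' + 2))) :
    glue U U' ⊔ glue L L' = glue (U ⊔ L) (U' ⊔ L') := by
  simp only [glue]
  rw [← RelEmbedding.coe_toEmbedding, ← RelEmbedding.coe_toEmbedding, map_sup_eq, map_sup_eq,
    sup_sup_sup_comm]

section Glue

variable {G : SimpleGraph (Fin (k + 2))} {H : SimpleGraph (Fin (k' + 2))}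

theorem glue_isIndepSet (hG : ¬ G.Adj 0 (Fin.last (k + 1))) (hH : ¬ H.Adj 0 1) :
    (glue G H).IsIndepSet
      ((G.map (oldVertex k k')).support ∩ (H.map (newVertex k k')).support) := by
  have h_common {v : Fin (k + k' + 2)} (hv : v ∈ (G.map (oldVertex k k')).support ∩
      (H.map (newVertex k k')).support) :
      v = oldVertex k k' 0 ∨ v = oldVertex k k' (Fin.last (k + 1)) :=
    (eq_bot_or_le_of_mem_support_map_newVertex hv.2).imp id
      (le_of_mem_support_map_oldVertex hv.1).antisymm
  have h_not_adj : ¬ (glue G H).Adj (oldVertex k k' 0) (oldVertex k k' (Fin.last (k + 1))) := by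
    rintro (h | h)
    · exact hG (G.map_adj_apply.1 h)
    · rw [← newVertex_zero, ← newVertex_one] at h
      exact hH (map_adj_apply.1 h)
  intro v hv w hw hvw
  rcases h_common hv with rfl | rfl <;> rcases h_common hw with rfl | rfl
  exacts [(hvw rfl).elim, h_not_adj, fun h => h_not_adj h.symm, (hvw rfl).elim]

theorem cliqueFree_three_glue (hG : G.CliqueFree 3) (hH : H.CliqueFree 3)
    (hG' : ¬ G.Adj 0 (Fin.last (k + 1))) (hH' : ¬ H.Adj 0 1) : (glue G H).CliqueFree 3 :=
  cliqueFree_three_sup ((cliqueFree_map_iff (f := (oldVertex k k').toEmbedding)).2 hG)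
    ((cliqueFree_map_iff (f := (newVertex k k').toEmbedding)).2 hH) (glue_isIndepSet hG' hH')

theorem degN_glue (hG : ¬ G.Adj 0 (Fin.last (k + 1))) (hH : ¬ H.Adj 0 1)
    (v : Fin (k + k' + 2)) : (glue G H).degN v =
      (G.map (oldVertex k k')).degN v + (H.map (newVertex k k')).degN v :=
  degN_sup_of_disjoint (disjoint_of_isIndepSet (glue_isIndepSet hG hH)) v

theorem degN_glue_hub (hG : ¬ G.Adj 0 (Fin.last (k + 1))) (hH : ¬ H.Adj 0 1) :
    (glue G H).degN (oldVertex k k' 0) = G.degN 0 + H.degN 0 := by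
  rw [degN_glue hG hH, ← degN_map (oldVertex k k').toEmbedding,
    ← degN_map (newVertex k k').toEmbedding]
  rfl

theorem degN_glue_junction (hG : ¬ G.Adj 0 (Fin.last (k + 1))) (hH : ¬ H.Adj 0 1) :
    (glue G H).degN (oldVertex k k' (Fin.last (k + 1))) = G.degN (Fin.last (k + 1)) + H.degN 1 := by
  rw [degN_glue hG hH, ← degN_map (oldVertex k k').toEmbedding,
    ← degN_map (newVertex k k').toEmbedding, ← newVertex_one]
  rfl

theorem oldVertex_notMem_support {i : Fin (k + 2)} (hi : i ≠ 0) (hi' : i < Fin.last (k + 1)) :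
    oldVertex k k' i ∉ (H.map (newVertex k k')).support := fun h => by
  rcases eq_bot_or_le_of_mem_support_map_newVertex h with h | h
  · exact hi ((oldVertex k k').injective h)
  · exact ((oldVertex k k').strictMono hi').not_ge h

theorem newVertex_notMem_support {j : Fin (k' + 2)} (hj : 1 < j) :
    newVertex k k' j ∉ (G.map (oldVertex k k')).support := fun h => by
  have h_le := le_of_mem_support_map_oldVertex h
  rw [← newVertex_one] at h_le
  exact ((newVertex k k').strictMono hj).not_ge h_le

theorem degN_glue_oldVertex (hG : ¬ G.Adj 0 (Fin.last (k + 1))) (hH : ¬ H.Adj 0 1)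
    {i : Fin (k + 2)} (hi : i ≠ 0) (hi' : i < Fin.last (k + 1)) :
    (glue G H).degN (oldVertex k k' i) = G.degN i := by
  rw [degN_glue hG hH, degN_eq_zero_of_notMem_support (oldVertex_notMem_support hi hi'), add_zero]
  exact degN_map (oldVertex k k').toEmbedding G i

theorem degN_glue_newVertex (hG : ¬ G.Adj 0 (Fin.last (k + 1))) (hH : ¬ H.Adj 0 1)
    {j : Fin (k' + 2)} (hj : 1 < j) : (glue G H).degN (newVertex k k' j) = H.degN j := by
  rw [degN_glue hG hH, degN_eq_zero_of_notMem_support (newVertex_notMem_support hj), zero_add]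
  exact degN_map (newVertex k k').toEmbedding H j

theorem not_adj_glue_oldVertex {i : Fin (k + 2)} (hG : ¬ G.Adj 0 i) (hi : i ≠ 0)
    (hi' : i < Fin.last (k + 1)) :
    ¬ (glue G H).Adj 0 (oldVertex k k' i) := by
  rintro (h | h)
  · exact hG (map_adj_apply (f := (oldVertex k k').toEmbedding).1 h)
  · exact oldVertex_notMem_support hi hi' ⟨_, h.symm⟩

theorem not_adj_glue_newVertex {j : Fin (k' + 2)} (hH : ¬ H.Adj 0 j) (hj : 1 < j) :
    ¬ (glue G H).Adj 0 (newVertex k k' j) := by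
  rintro (h | h)
  · exact newVertex_notMem_support hj ⟨_, h.symm⟩
  · exact hH (map_adj_apply (f := (newVertex k k').toEmbedding).1 h)

end Glue

/-- `U` and `L` are the pages of a book embedding on the line `0 < 1 < ⋯ < k + 1` of a
triangle-free graph with a 4-cycle in which the *hub* `0` has degree `d`, the *ends* `1` and `k + 1`
have degrees `s` and `t`, and every other vertex has degree `3`. Strips are glued end to end, with
a common hub; that the ends are not adjacent to the hub keeps the result triangle-free. -/
structure IsStrip (U L : SimpleGraph (Fin (k + 2))) (d s t : ℕ) : Prop where
  pos : 0 < k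
  noncrossing_upper : NoncrossingOnLine U
  noncrossing_lower : NoncrossingOnLine L
  cliqueFree : (U ⊔ L).CliqueFree 3
  square : cycleGraph 4 ⊑ U ⊔ L
  not_adj_one : ¬ (U ⊔ L).Adj 0 1
  not_adj_last : ¬ (U ⊔ L).Adj 0 (Fin.last (k + 1))
  degN_hub : (U ⊔ L).degN 0 = d
  degN_one : (U ⊔ L).degN 1 = s
  degN_interior : ∀ i, 1 < i → i < Fin.last (k + 1) → (U ⊔ L).degN i = 3
  degN_last : (U ⊔ L).degN (Fin.last (k + 1)) = t

/-- There is a strip with `k + 2` vertices whose hub has degree `d` and whose ends have degrees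
`s` and `t`. -/
def HasStrip (k d s t : ℕ) : Prop :=
  ∃ U L : SimpleGraph (Fin (k + 2)), IsStrip U L d s t

namespace IsStrip

variable {U L : SimpleGraph (Fin (k + 2))} {U' L' : SimpleGraph (Fin (k' + 2))}
  {d d' s s' t t' : ℕ}

theorem degN_glue_interior (h : IsStrip U L d s t) (h' : IsStrip U' L' d' s' t')
    (hts : t + s' = 3) {i : Fin (k + k' + 2)} (hi : 1 < i) (hi' : i < Fin.last (k + k' + 1)) :
    (glue (U ⊔ L) (U' ⊔ L')).degN i = 3 := by
  have hn := h.not_adj_last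
  have hn' := h'.not_adj_one
  have hi_pos : 1 < (i : ℕ) := hi
  have hi_lt : (i : ℕ) < k + k' + 1 := hi'
  rcases lt_trichotomy (i : ℕ) (k + 1) with hik | hik | hik
  · obtain ⟨j, rfl⟩ : ∃ j, oldVertex k k' j = i := ⟨⟨i, by omega⟩, rfl⟩
    have hj : j ≠ 0 := fun hj => by simp [val_oldVertex, hj] at hi_pos
    rw [degN_glue_oldVertex hn hn' hj hik]
    exact h.degN_interior j hi hik
  · obtain rfl : oldVertex k k' (Fin.last (k + 1)) = i := Fin.ext hik.symm
    rw [degN_glue_junction hn hn', h.degN_last, h'.degN_one, hts]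
  · obtain ⟨j, hj, hj_last, rfl⟩ : ∃ j, 1 < j ∧ j < Fin.last (k' + 1) ∧ newVertex k k' j = i := by
      refine ⟨⟨i - k, by omega⟩, ?_, ?_, Fin.ext ?_⟩
      · simp only [Fin.lt_def, Fin.val_one]; omega
      · simp only [Fin.lt_def, Fin.val_last]; omega
      · rw [val_newVertex (by simp only [ne_eq, Fin.ext_iff, Fin.val_zero]; omega)]
        exact Nat.add_sub_cancel' (by omega)
    rw [degN_glue_newVertex hn hn' hj, h'.degN_interior j hj hj_last]

theorem glue (h : IsStrip U L d s t) (h' : IsStrip U' L' d' s' t') (hts : t + s' = 3) :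
    IsStrip (glue U U') (glue L L') (d + d') s t' := by
  have hn := h.not_adj_last
  have hn' := h'.not_adj_one
  have h_one_lt : 1 < Fin.last (k + 1) := Nat.succ_lt_succ h.pos
  have h_one_lt' : 1 < Fin.last (k' + 1) := Nat.succ_lt_succ h'.pos
  constructor
  case pos => exact Nat.add_pos_left h.pos _
  case noncrossing_upper => exact h.noncrossing_upper.glue h'.noncrossing_upper
  case noncrossing_lower => exact h.noncrossing_lower.glue h'.noncrossing_lower
  all_goals rw [glue_sup_glue]
  case cliqueFree => exact cliqueFree_three_glue h.cliqueFree h'.cliqueFree hn hn'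
  case square =>
    have h_map := (Embedding.map (oldVertex k k').toEmbedding (U ⊔ L)).isContained
    exact (h.square.trans h_map).mono_right le_sup_left
  case not_adj_one => exact not_adj_glue_oldVertex (i := 1) h.not_adj_one one_ne_zero h_one_lt
  case not_adj_last =>
    rw [← newVertex_last]
    exact not_adj_glue_newVertex h'.not_adj_last h_one_lt'
  case degN_hub => rw [← h.degN_hub, ← h'.degN_hub]; exact degN_glue_hub hn hn'
  case degN_one =>
    rw [← h.degN_one]
    exact degN_glue_oldVertex (i := 1) (k' := k') hn hn' one_ne_zero h_one_lt
  case degN_last => rw [← newVertex_last, degN_glue_newVertex hn hn' h_one_lt', h'.degN_last]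
  case degN_interior => exact fun i => degN_glue_interior h h' hts

end IsStrip

theorem HasStrip.glue {d d' s s' t t' : ℕ} (h : HasStrip k d s t) (h' : HasStrip k' d' s' t')
    (hts : t + s' = 3) : HasStrip (k + k') (d + d') s t' :=
  let ⟨_, _, hS⟩ := h
  let ⟨_, _, hS'⟩ := h'
  ⟨_, _, hS.glue hS' hts⟩

theorem HasStrip.mem_bicageOrders {d : ℕ} (h : HasStrip k d 3 3) : k + 2 ∈ bicageOrders 3 d 4 := by
  obtain ⟨U, L, hS⟩ := h
  refine ⟨Fin (k + 2), inferInstance, U ⊔ L, hS.noncrossing_upper.isPlanar_sup hS.noncrossing_lower,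
    ⟨girth_eq_four hS.cliqueFree hS.square, fun i => ?_, ⟨1, hS.degN_one⟩, ⟨0, hS.degN_hub⟩⟩,
    Fintype.card_fin _⟩
  rcases eq_or_ne i 0 with rfl | h0
  · exact .inr hS.degN_hub
  rcases (Fin.one_le_of_ne_zero h0).eq_or_lt with h1 | h1
  · exact .inl (h1 ▸ hS.degN_one)
  rcases i.le_last.eq_or_lt with rfl | h_last
  · exact .inl hS.degN_last
  · exact .inl (hS.degN_interior i h1 h_last)

end Strips

section Pieces

instance {V : Type*} [Fintype V] (G : SimpleGraph V) [DecidableRel G.Adj] (v : V) (n : ℕ) :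
    Decidable (G.degN v = n) :=
  decidable_of_iff (Finset.card {w | G.Adj v w} = n) <| by
    rw [degN, ← Set.ncard_coe_finset]
    simp [neighborSet]

instance {V : Type*} [Fintype V] [LinearOrder V] (G : SimpleGraph V) [DecidableRel G.Adj] :
    Decidable (NoncrossingOnLine G) :=
  inferInstanceAs <| Decidable
    (∀ a b, G.Adj a b → ∀ c d, G.Adj c d → a < c → c < b → ¬ b < d)

instance {V : Type*} [Fintype V] [DecidableEq V] (G : SimpleGraph V) [DecidableRel G.Adj] :
    Decidable (cycleGraph 4 ⊑ G) :=
  decidable_of_iff _ cycleGraph_four_isContained_iff.symm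

instance {V : Type*} [Fintype V] (G : SimpleGraph V) [DecidableRel G.Adj] :
    Decidable (G.CliqueFree 3) :=
  decidable_of_iff _ cliqueFree_three_iff.symm

/-- The graph with the given list of edges. -/
def edgeListGraph {n : ℕ} (l : List (Fin n × Fin n)) : SimpleGraph (Fin n) :=
  SimpleGraph.fromRel fun a b => (a, b) ∈ l

instance {n : ℕ} (l : List (Fin n × Fin n)) : DecidableRel (edgeListGraph l).Adj :=
  inferInstanceAs <| DecidableRel (SimpleGraph.fromRel fun a b => (a, b) ∈ l).Adj

theorem hasStrip_blockThree : HasStrip 7 3 1 2 := by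
  refine ⟨edgeListGraph [(0, 2), (0, 4), (0, 7), (1, 2), (2, 3), (3, 4), (4, 5), (5, 6), (5, 7),
      (7, 8)],
    edgeListGraph [(3, 6), (6, 8)], ?_⟩
  constructor <;> decide +kernel

theorem hasStrip_blockFour : HasStrip 8 4 1 2 := by
  refine ⟨edgeListGraph [(0, 4), (0, 8), (1, 3), (2, 3), (3, 4), (4, 5), (5, 7), (6, 7), (7, 8),
      (8, 9)],
    edgeListGraph [(0, 2), (0, 6), (2, 5), (6, 9)], ?_⟩
  constructor <;> decide +kernel

theorem hasStrip_blockFive : HasStrip 9 5 1 2 := by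
  refine ⟨edgeListGraph [(0, 2), (0, 5), (0, 9), (1, 2), (2, 4), (3, 4), (4, 5), (5, 6), (6, 8),
      (7, 8), (8, 9), (9, 10)],
    edgeListGraph [(0, 3), (0, 7), (3, 6), (7, 10)], ?_⟩
  constructor <;> decide +kernel

theorem hasStrip_leftEnd : HasStrip 8 4 3 2 := by
  refine ⟨edgeListGraph [(0, 8), (1, 2), (1, 3), (1, 8), (3, 4), (3, 6), (4, 5), (5, 6), (6, 7),
      (8, 9)],
    edgeListGraph [(0, 2), (0, 5), (0, 7), (2, 4), (7, 9)], ?_⟩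
  constructor <;> decide +kernel

theorem hasStrip_rightEnd : HasStrip 10 5 1 3 := by
  refine ⟨edgeListGraph [(0, 2), (1, 2), (2, 11), (3, 4), (3, 11), (4, 5), (4, 7), (5, 6), (6, 7),
      (7, 9), (8, 9), (9, 10), (10, 11)],
    edgeListGraph [(0, 3), (0, 5), (0, 8), (0, 10), (6, 8)], ?_⟩
  constructor <;> decide +kernel

theorem HasStrip.glue_blockFive {k d s : ℕ} (h : HasStrip k d s 2) (q : ℕ) :
    HasStrip (k + 9 * q) (d + 5 * q) s 2 := by
  induction q with
  | zero => exact h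
  | succ q ih => exact ih.glue hasStrip_blockFive rfl

end Pieces

theorem mem_bicageOrders_of_hasStrip {k d m n : ℕ} (h : HasStrip k d 3 2) (q : ℕ)
    (hm : m = d + 5 * q + 5) (hn : n = k + 9 * q + 12) : n ∈ bicageOrders 3 m 4 := by
  rw [hm, hn]
  exact ((h.glue_blockFive q).glue hasStrip_rightEnd rfl).mem_bicageOrders

/-- For `m ≥ 14` there is a finite planar `({3,m};4)`-graph on
`m + 4⌈(m+1)/5⌉ + 3` vertices (here `⌈(m+1)/5⌉ = (m+5)/5` in natural division);
hence `n_p({3,m};4) ≤ m + 4⌈(m+1)/5⌉ + 3`. -/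
theorem planar_three_m_four_upper_bound (m : ℕ) (hm : 14 ≤ m) :
    (m + 4 * ((m + 1 + 4) / 5) + 3) ∈ bicageOrders 3 m 4 ∧
      ∀ n, IsLeast (bicageOrders 3 m 4) n → n ≤ m + 4 * ((m + 1 + 4) / 5) + 3 := by
  suffices h_mem : (m + 4 * ((m + 1 + 4) / 5) + 3) ∈ bicageOrders 3 m 4 from
    ⟨h_mem, fun n hn => hn.2 h_mem⟩
  have h_three := hasStrip_leftEnd.glue hasStrip_blockThree rfl
  have h_four := hasStrip_leftEnd.glue hasStrip_blockFour rfl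
  have h_three_three := h_three.glue hasStrip_blockThree rfl
  have h_three_four := h_three.glue hasStrip_blockFour rfl
  obtain h_mod | h_mod | h_mod | h_mod | h_mod :
      m % 5 = 0 ∨ m % 5 = 1 ∨ m % 5 = 2 ∨ m % 5 = 3 ∨ m % 5 = 4 := by omega
  · exact mem_bicageOrders_of_hasStrip h_three_three ((m - 15) / 5) (by omega) (by omega)
  · exact mem_bicageOrders_of_hasStrip h_three_four ((m - 16) / 5) (by omega) (by omega)
  · exact mem_bicageOrders_of_hasStrip h_three ((m - 12) / 5) (by omega) (by omega)
  · exact mem_bicageOrders_of_hasStrip h_four ((m - 13) / 5) (by omega) (by omega)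
  · exact mem_bicageOrders_of_hasStrip hasStrip_leftEnd ((m - 9) / 5) (by omega) (by omega)
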